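/- In F_2[x,y], the polynomial P(x,y) = x^{10} + x^9y + x^9 + x^8y^2 + x^8y + x^8 + x^6y^4 + x^6y^3 + x^6y^2 + x^6y + x^6 + x^5y^5 + x^5 + x^4y^6 + x^4y^4 + x^4y^3 + x^4y^2 + x^4 + x^3y^6 + x^3y^4 + x^3y^3 + x^3y + x^2y^8 + x^2y^6 + x^2y^4 + x^2y^2 + x^2 + xy^9 + xy^8 + xy^6 + xy^3 + xy + x + y^{10} + y^9 + y^8 + y^6 + y^5 + y^4 + y^2 + y + 1 divides g_{205}(x,y); consequently g_{205}(x,y) is reducible in F_2[x,y] (so t = 205, with i = 2 and ℓ = 51, is a counterexample to the conjecture that g_t is absolutely irreducible for all t not of the form 2^i+1 or 4^i−2^i+1). -/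

import Mathlib

open MvPolynomial

set_option maxHeartbeats 1000000

/-- The explicit degree-10 factor of `g_205` found with MAGMA. -/
noncomputable def counterexampleFactor : MvPolynomial (Fin 2) (ZMod 2) :=
  X 0 ^ 10 + X 0 ^ 9 * X 1 + X 0 ^ 9 + X 0 ^ 8 * X 1 ^ 2 + X 0 ^ 8 * X 1 + X 0 ^ 8 +
    X 0 ^ 6 * X 1 ^ 4 + X 0 ^ 6 * X 1 ^ 3 + X 0 ^ 6 * X 1 ^ 2 + X 0 ^ 6 * X 1 + X 0 ^ 6 +
    X 0 ^ 5 * X 1 ^ 5 + X 0 ^ 5 + X 0 ^ 4 * X 1 ^ 6 + X 0 ^ 4 * X 1 ^ 4 +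
    X 0 ^ 4 * X 1 ^ 3 + X 0 ^ 4 * X 1 ^ 2 + X 0 ^ 4 + X 0 ^ 3 * X 1 ^ 6 +
    X 0 ^ 3 * X 1 ^ 4 + X 0 ^ 3 * X 1 ^ 3 + X 0 ^ 3 * X 1 + X 0 ^ 2 * X 1 ^ 8 +
    X 0 ^ 2 * X 1 ^ 6 + X 0 ^ 2 * X 1 ^ 4 + X 0 ^ 2 * X 1 ^ 2 + X 0 ^ 2 +
    X 0 * X 1 ^ 9 + X 0 * X 1 ^ 8 + X 0 * X 1 ^ 6 + X 0 * X 1 ^ 3 + X 0 * X 1 + X 0 +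
    X 1 ^ 10 + X 1 ^ 9 + X 1 ^ 8 + X 1 ^ 6 + X 1 ^ 5 + X 1 ^ 4 + X 1 ^ 2 + X 1 + 1

/-!
With `q = 4` we have `13 = (q ^ 3 + 1) / (q + 1)` and `205 = (q ^ 5 + 1) / (q + 1)`, and the
explicit factor turns out to be `g_13`. The divisibility `f_13 ∣ f_205` holds because `f_205`
vanishes wherever `f_13` does. Indeed, the entries of `(x, x + y + 1, y, 1)` have sum zero, and if
we write them as `uᵢ ^ (q + 1)` and put `U = (uᵢ)`, then `f_1 = 0`, `f_13` and `f_205` are the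
pairings of `U` with the Frobenius twists `U^q`, `U^(q^3)` and `U^(q^5)`. When the first two vanish,
`U`, `U^(q^2)` and `U^(q^4)` are all orthogonal to the plane spanned by `U^q` and `U^(q^3)`, so they
are linearly dependent. Twisting the relation by Frobenius and pairing it with `U` makes the third
pairing vanish.

To turn this into divisibility, work in the residue ring of `𝔽₂[y][x]` modulo the monic polynomial
`f_13 / (y + 1)`: the minors of `U, U^(q^2)` and `U^q, U^(q^3)` are regular there, because nonzero
elements of `𝔽₂[y]` are.
-/

section Orthogonality

variable {A : Type*} [CommRing A] {u v w r s : Fin 4 → A}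

theorem minor_mul_minor_of_dotProduct_eq_zero (hur : u ⬝ᵥ r = 0) (hus : u ⬝ᵥ s = 0)
    (hvr : v ⬝ᵥ r = 0) (hvs : v ⬝ᵥ s = 0) :
    (u 0 * v 1 - u 1 * v 0) * (r 0 * s 1 - r 1 * s 0) =
      (u 2 * v 3 - u 3 * v 2) * (r 2 * s 3 - r 3 * s 2) := by
  simp only [dotProduct, Fin.sum_univ_four] at hur hus hvr hvs
  linear_combination (v 0 * s 0 + v 1 * s 1) * hur - (u 2 * r 2 + u 3 * r 3) * hvs
    - (v 0 * r 0 + v 1 * r 1) * hus + (u 2 * s 2 + u 3 * s 3) * hvr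

theorem eq_zero_of_dotProduct_eq_zero (hwr : w ⬝ᵥ r = 0) (hws : w ⬝ᵥ s = 0)
    (h₂ : w 2 = 0) (h₃ : w 3 = 0) (hrs : r 0 * s 1 - r 1 * s 0 ∈ nonZeroDivisors A) : w = 0 := by
  simp only [dotProduct, Fin.sum_univ_four, h₂, h₃, zero_mul, add_zero] at hwr hws
  have h₀ : w 0 = 0 := (mul_right_mem_nonZeroDivisors_eq_zero_iff hrs).1 <| by
    linear_combination s 1 * hwr - r 1 * hws
  have h₁ : w 1 = 0 := (mul_right_mem_nonZeroDivisors_eq_zero_iff hrs).1 <| by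
    linear_combination r 0 * hws - s 0 * hwr
  ext i
  fin_cases i <;> assumption

theorem minor_smul_add_minor_smul_add_minor_smul_eq_zero (hur : u ⬝ᵥ r = 0) (hus : u ⬝ᵥ s = 0)
    (hvr : v ⬝ᵥ r = 0) (hvs : v ⬝ᵥ s = 0) (hwr : w ⬝ᵥ r = 0) (hws : w ⬝ᵥ s = 0)
    (huv : u 2 * v 3 - u 3 * v 2 ∈ nonZeroDivisors A)
    (hrs : r 2 * s 3 - r 3 * s 2 ∈ nonZeroDivisors A) :
    (v 2 * w 3 - v 3 * w 2) • u + (w 2 * u 3 - w 3 * u 2) • v +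
      (u 2 * v 3 - u 3 * v 2) • w = 0 := by
  have hrs' : r 0 * s 1 - r 1 * s 0 ∈ nonZeroDivisors A := by
    have h := mul_mem huv hrs
    rw [← minor_mul_minor_of_dotProduct_eq_zero hur hus hvr hvs] at h
    exact (mul_mem_nonZeroDivisors.1 h).2
  refine eq_zero_of_dotProduct_eq_zero (r := r) (s := s) ?_ ?_ ?_ ?_ hrs'
  · simp only [add_dotProduct, smul_dotProduct, hur, hvr, hwr, smul_zero, add_zero]
  · simp only [add_dotProduct, smul_dotProduct, hus, hvs, hws, smul_zero, add_zero]
  all_goals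
    simp only [Pi.add_apply, Pi.smul_apply, smul_eq_mul]
    ring

end Orthogonality

section PowerSums

variable {A : Type*} [CommRing A] {p n q : ℕ} [ExpChar A p]

theorem minor_frobenius_mem_nonZeroDivisors {b c : A} {m : ℕ} (hq : q = p ^ n) (hm : q = m + 1)
    (h : b * c ^ q - c * b ^ q ∈ nonZeroDivisors A) :
    c ^ m - b ^ m ∈ nonZeroDivisors A ∧
      b * c ^ (m * q + 1) - c * b ^ (m * q + 1) ∈ nonZeroDivisors A := by
  have hfactor : b * c ^ q - c * b ^ q = b * c * (c ^ m - b ^ m) := by rw [hm]; ring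
  obtain ⟨hbc, hminor⟩ := mul_mem_nonZeroDivisors.1 (hfactor ▸ h)
  have hfrob : (c ^ m - b ^ m) ^ q = c ^ (m * q) - b ^ (m * q) := by
    rw [hq, sub_pow_expChar_pow, ← pow_mul, ← pow_mul]
  refine ⟨hminor, ?_⟩
  convert mul_mem hbc (pow_mem hminor q) using 1
  rw [hfrob]
  ring

theorem sum_pow_mul_frobenius_eq_zero {ι : Type*} [Fintype ι] {a : ι → A} {e : ℕ} (hq : q = p ^ n)
    (h : ∑ i, a i ^ e = 0) : ∑ i, a i ^ (e * q) = 0 := by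
  have hF := congrArg (iterateFrobenius A p n) h
  simpa only [map_sum, map_zero, iterateFrobenius_def, ← pow_mul, ← hq] using hF

-- For `aᵢ = uᵢ ^ (q + 1)`, the vectors below are `U = (uᵢ)`, `U^(q^2)`, `U^(q^4)` divided by `uᵢ`
-- and `U^q`, `U^(q^3)` multiplied by `uᵢ`, so that only powers of `aᵢ` remain.
theorem exists_linear_relation {m : ℕ} (hq : q = p ^ n) (hm : q = m + 1) {a : Fin 4 → A}
    (h₁ : ∑ i, a i = 0) (h₃ : ∑ i, a i ^ (m * q + 1) = 0)
    (hreg : a 2 * a 3 ^ q - a 3 * a 2 ^ q ∈ nonZeroDivisors A) :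
    ∃ α β : A, ∃ γ ∈ nonZeroDivisors A, ∀ i, α + β * a i ^ m + γ * a i ^ (m * (q ^ 2 + 1)) = 0 := by
  obtain ⟨hγ, hδ⟩ := minor_frobenius_mem_nonZeroDivisors hq hm hreg
  have h₁q : ∑ i, a i ^ (1 * q) = 0 := sum_pow_mul_frobenius_eq_zero hq (by simpa only [pow_one])
  have h₁qq := sum_pow_mul_frobenius_eq_zero hq h₁q
  have h₁qqq := sum_pow_mul_frobenius_eq_zero hq h₁qq
  have h₃q := sum_pow_mul_frobenius_eq_zero hq h₃
  have relation := minor_smul_add_minor_smul_add_minor_smul_eq_zero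
    (u := fun _ => 1) (v := fun i => a i ^ m) (w := fun i => a i ^ (m * (q ^ 2 + 1)))
    (r := a) (s := fun i => a i ^ (m * q + 1))
    (by simpa only [dotProduct, one_mul] using h₁)
    (by simpa only [dotProduct, one_mul] using h₃)
    (by simpa only [dotProduct, ← pow_succ, ← hm, one_mul] using h₁q)
    (by rw [← h₁qq]; exact Finset.sum_congr rfl fun i _ => by rw [hm]; ring)
    (by rw [← h₃q]; exact Finset.sum_congr rfl fun i _ => by rw [hm]; ring)
    (by rw [← h₁qqq]; exact Finset.sum_congr rfl fun i _ => by rw [hm]; ring)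
    (by simpa only [one_mul] using hγ) hδ
  refine ⟨a 2 ^ m * a 3 ^ (m * (q ^ 2 + 1)) - a 3 ^ m * a 2 ^ (m * (q ^ 2 + 1)),
    a 2 ^ (m * (q ^ 2 + 1)) - a 3 ^ (m * (q ^ 2 + 1)), a 3 ^ m - a 2 ^ m, hγ, fun i => ?_⟩
  simpa only [Pi.add_apply, Pi.smul_apply, smul_eq_mul, mul_one, one_mul, Pi.zero_apply]
    using congrFun relation i

theorem sum_pow_eq_zero_of_linear_relation {e f : ℕ} (hq : q = p ^ n) {ι : Type*} [Fintype ι]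
    {a : ι → A} {α β γ : A} (hγ : γ ∈ nonZeroDivisors A)
    (relation : ∀ i, α + β * a i ^ e + γ * a i ^ f = 0)
    (h₁ : ∑ i, a i = 0) (he : ∑ i, a i ^ (e * q + 1) = 0) : ∑ i, a i ^ (f * q + 1) = 0 := by
  have twisted i : α ^ q * a i + β ^ q * a i ^ (e * q + 1) + γ ^ q * a i ^ (f * q + 1) = 0 := by
    have h := congrArg (iterateFrobenius A p n) (relation i)
    simp only [map_add, map_mul, map_zero, iterateFrobenius_def, ← pow_mul, ← hq] at h
    linear_combination a i * h
  have h := Finset.sum_eq_zero fun i (_ : i ∈ Finset.univ) => twisted i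
  simp only [Finset.sum_add_distrib, ← Finset.mul_sum, h₁, he, mul_zero, zero_add] at h
  exact (mul_left_mem_nonZeroDivisors_eq_zero_iff (pow_mem hγ q)).1 h

theorem sum_pow_eq_zero_of_sum_pow_kasami_eq_zero (hq : q = p ^ n) {a : Fin 4 → A}
    (h₁ : ∑ i, a i = 0) (h₃ : ∑ i, a i ^ (q ^ 2 - q + 1) = 0)
    (hreg : a 2 * a 3 ^ q - a 3 * a 2 ^ q ∈ nonZeroDivisors A) :
    ∑ i, a i ^ (q ^ 4 - q ^ 3 + q ^ 2 - q + 1) = 0 := by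
  obtain ⟨m, hm⟩ : ∃ m, q = m + 1 := Nat.exists_eq_add_one.2 (hq ▸ expChar_pow_pos A p n)
  have exponent₃ : q ^ 2 - q = m * q := Nat.sub_eq_of_eq_add (by rw [hm]; ring)
  have exponent₅ : q ^ 4 - q ^ 3 + q ^ 2 - q = m * (q ^ 2 + 1) * q := by
    rw [Nat.sub_eq_of_eq_add (show q ^ 4 = m * q ^ 3 + q ^ 3 by rw [hm]; ring)]
    exact Nat.sub_eq_of_eq_add (by rw [hm]; ring)
  rw [exponent₃] at h₃
  rw [exponent₅]
  obtain ⟨α, β, γ, hγ, relation⟩ := exists_linear_relation hq hm h₁ h₃ hreg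
  exact sum_pow_eq_zero_of_linear_relation hq hγ relation h₁ h₃

end PowerSums

section MonicDivisors

open scoped Polynomial

variable {R : Type*} [CommRing R] {Q : R[X]}

theorem charP_two_adjoinRoot [CharP R 2] [Nontrivial (AdjoinRoot Q)] : CharP (AdjoinRoot Q) 2 :=
  CharTwo.of_one_ne_zero_of_two_eq_zero one_ne_zero <| by
    rw [← map_ofNat (AdjoinRoot.of Q), CharTwo.two_eq_zero, map_zero]

variable [IsDomain R]

theorem dvd_C_mul_iff_of_monic (hQ : Q.Monic) {d : R} (hd : d ≠ 0) {h : R[X]} :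
    Q ∣ Polynomial.C d * h ↔ Q ∣ h := by
  rw [← Polynomial.modByMonic_eq_zero_iff_dvd hQ, ← Polynomial.modByMonic_eq_zero_iff_dvd hQ,
    ← Polynomial.smul_eq_C_mul, Polynomial.smul_modByMonic, smul_eq_zero_iff_right hd]

theorem adjoinRoot_of_mem_nonZeroDivisors (hQ : Q.Monic) {d : R} (hd : d ≠ 0) :
    AdjoinRoot.of Q d ∈ nonZeroDivisors (AdjoinRoot Q) := by
  refine mem_nonZeroDivisors_iff_left.2 fun z hz => ?_
  obtain ⟨h, rfl⟩ := AdjoinRoot.mk_surjective z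
  rw [← AdjoinRoot.mk_C, ← map_mul, AdjoinRoot.mk_eq_zero] at hz
  exact AdjoinRoot.mk_eq_zero.2 ((dvd_C_mul_iff_of_monic hQ hd).1 hz)

end MonicDivisors

/-- The polynomial `f_t(x, y) = x^t + y^t + 1 + (x + y + 1)^t`, evaluated at elements of an
arbitrary semiring so that it can be read in `R[x, y]`, in `R[y][x]` and in quotients of these. -/
def quadrinomial {A : Type*} [Semiring A] (t : ℕ) (x y : A) : A :=
  x ^ t + y ^ t + 1 + (x + y + 1) ^ t

theorem map_quadrinomial {A B : Type*} [Semiring A] [Semiring B] (φ : A →+* B) (t : ℕ) (x y : A) :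
    φ (quadrinomial t x y) = quadrinomial t (φ x) (φ y) := by
  simp only [quadrinomial, map_add, map_pow, map_one]

theorem sum_pow_eq_quadrinomial {A : Type*} [CommSemiring A] (t : ℕ) (x y : A) :
    ∑ i, ![x, x + y + 1, y, 1] i ^ t = quadrinomial t x y := by
  simp only [Fin.sum_univ_four, Matrix.cons_val, one_pow, quadrinomial]
  ring

theorem quadrinomial_one {A : Type*} [CommRing A] [CharP A 2] (x y : A) :
    quadrinomial 1 x y = 0 := by
  simp only [quadrinomial, pow_one, CharTwo.add_self_eq_zero]

theorem add_one_dvd_quadrinomial {A : Type*} [CommRing A] [CharP A 2] (t : ℕ) (x y : A) :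
    y + 1 ∣ quadrinomial t x y := by
  have hy : y + 1 ∣ y ^ t + 1 := by
    simpa only [CharTwo.sub_eq_add, one_pow] using sub_dvd_pow_sub_pow y 1 t
  have hx : y + 1 ∣ (x + y + 1) ^ t - x ^ t := by
    simpa only [add_assoc, add_sub_cancel_left] using sub_dvd_pow_sub_pow (x + y + 1) x t
  rw [CharTwo.sub_eq_add] at hx
  convert dvd_add hy hx using 1
  rw [quadrinomial]
  ring

section UnivariateQuadrinomial

open scoped Polynomial

variable {R : Type*} [CommRing R]

theorem coeff_quadrinomial {t k : ℕ} (hk : k ≠ 0) (c : R) :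
    (quadrinomial t Polynomial.X (Polynomial.C c)).coeff k =
      (if k = t then 1 else 0) + (c + 1) ^ (t - k) * t.choose k := by
  rw [quadrinomial, add_assoc Polynomial.X, ← Polynomial.C_1, ← Polynomial.C_add,
    ← Polynomial.C_pow]
  simp only [Polynomial.coeff_add, Polynomial.coeff_X_pow, Polynomial.coeff_C, hk,
    Polynomial.coeff_X_add_C_pow, if_false, add_zero]

variable [CharP R 2]

theorem natDegree_quadrinomial_le (t : ℕ) (c : R) :
    (quadrinomial t Polynomial.X (Polynomial.C c)).natDegree ≤ t - 1 := by
  refine Polynomial.natDegree_le_iff_coeff_eq_zero.2 fun k hk => ?_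
  rw [coeff_quadrinomial (by omega)]
  rcases (show t ≤ k by omega).eq_or_lt with rfl | htk
  · simp only [if_true, Nat.sub_self, pow_zero, Nat.choose_self, Nat.cast_one, mul_one,
      CharTwo.add_self_eq_zero]
  · simp only [htk.ne', if_false, Nat.choose_eq_zero_of_lt htk, Nat.cast_zero, mul_zero, add_zero]

theorem coeff_pred_quadrinomial {t : ℕ} (ht : Odd t) (ht₁ : 1 < t) (c : R) :
    (quadrinomial t Polynomial.X (Polynomial.C c)).coeff (t - 1) = c + 1 := by
  rw [coeff_quadrinomial (by omega), if_neg (by omega), Nat.sub_sub_self ht₁.le, pow_one,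
    Nat.choose_symm_of_eq_add (show t = t - 1 + 1 by omega), Nat.choose_one_right,
    natCast_eq_one_of_odd_of_two_eq_zero ht CharTwo.two_eq_zero, zero_add, mul_one]

theorem natDegree_quadrinomial {t : ℕ} (ht : Odd t) (ht₁ : 1 < t) {c : R} (hc : c + 1 ≠ 0) :
    (quadrinomial t Polynomial.X (Polynomial.C c)).natDegree = t - 1 :=
  (natDegree_quadrinomial_le t c).antisymm <|
    Polynomial.le_natDegree_of_ne_zero (by rwa [coeff_pred_quadrinomial ht ht₁])

variable [IsDomain R]

theorem exists_monic_quadrinomial_eq {t : ℕ} (ht : Odd t) (ht₁ : 1 < t) {c : R} (hc : c + 1 ≠ 0) :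
    ∃ Q : R[X], Q.Monic ∧
      quadrinomial t Polynomial.X (Polynomial.C c) = Polynomial.C (c + 1) * Q := by
  obtain ⟨Q, hQ⟩ := add_one_dvd_quadrinomial t Polynomial.X (Polynomial.C c)
  rw [← Polynomial.C_1, ← Polynomial.C_add] at hQ
  refine ⟨Q, mul_left_cancel₀ hc ?_, hQ⟩
  rw [← Polynomial.leadingCoeff_C (c + 1), ← Polynomial.leadingCoeff_mul, ← hQ,
    Polynomial.leadingCoeff, natDegree_quadrinomial ht ht₁ hc, coeff_pred_quadrinomial ht ht₁,
    Polynomial.leadingCoeff_C, mul_one]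

variable {n q : ℕ}

theorem dvd_quadrinomial_of_monic_of_dvd_quadrinomial_kasami {Q : R[X]} (hQ : Q.Monic)
    (hq : q = 2 ^ n) {y : R} (hy : y ^ q ≠ y)
    (h : Q ∣ quadrinomial (q ^ 2 - q + 1) Polynomial.X (Polynomial.C y)) :
    Q ∣ quadrinomial (q ^ 4 - q ^ 3 + q ^ 2 - q + 1) Polynomial.X (Polynomial.C y) := by
  rw [← AdjoinRoot.mk_eq_zero] at h ⊢
  rcases subsingleton_or_nontrivial (AdjoinRoot Q) with _ | _
  · exact Subsingleton.elim _ _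
  have := charP_two_adjoinRoot (Q := Q)
  rw [map_quadrinomial, ← sum_pow_eq_quadrinomial] at h ⊢
  refine sum_pow_eq_zero_of_sum_pow_kasami_eq_zero hq ?_ h ?_
  · simpa only [pow_one, quadrinomial_one] using
      sum_pow_eq_quadrinomial 1 (AdjoinRoot.mk Q Polynomial.X) (AdjoinRoot.mk Q (Polynomial.C y))
  · have hreg := adjoinRoot_of_mem_nonZeroDivisors hQ (sub_ne_zero.2 hy.symm)
    simpa only [map_sub, map_pow, AdjoinRoot.mk_C, Matrix.cons_val, one_pow, mul_one, one_mul]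
      using hreg

theorem quadrinomial_kasami_dvd_quadrinomial (hq : q = 2 ^ n) {y : R} (hy : y ^ q ≠ y) :
    quadrinomial (q ^ 2 - q + 1) Polynomial.X (Polynomial.C y) ∣
      quadrinomial (q ^ 4 - q ^ 3 + q ^ 2 - q + 1) Polynomial.X (Polynomial.C y) := by
  have hy₁ : y + 1 ≠ 0 := by
    intro h
    exact hy (by rw [CharTwo.add_eq_zero.1 h, one_pow])
  have hodd : Odd (q ^ 2 - q + 1) := by
    rw [Nat.odd_add_one, Nat.not_odd_iff_even, sq, ← Nat.mul_sub_one]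
    exact Nat.even_mul_pred_self q
  have hq₁ : 1 < q := by
    have hpos : 0 < q := hq ▸ Nat.two_pow_pos n
    have hne : q ≠ 1 := by
      rintro rfl
      exact hy (pow_one y)
    omega
  have hone : 1 < q ^ 2 - q + 1 :=
    Nat.lt_add_of_pos_left (Nat.sub_pos_of_lt (lt_self_pow₀ hq₁ one_lt_two))
  obtain ⟨Q, hQ, hkasami⟩ := exists_monic_quadrinomial_eq hodd hone hy₁
  obtain ⟨Q', hQ'⟩ := add_one_dvd_quadrinomial (q ^ 4 - q ^ 3 + q ^ 2 - q + 1)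
    Polynomial.X (Polynomial.C y)
  rw [← Polynomial.C_1, ← Polynomial.C_add] at hQ'
  have hdvd := dvd_quadrinomial_of_monic_of_dvd_quadrinomial_kasami hQ hq hy
    (hkasami ▸ dvd_mul_left Q _)
  rw [hQ', dvd_C_mul_iff_of_monic hQ hy₁] at hdvd
  rw [hkasami, hQ']
  exact mul_dvd_mul_left _ hdvd

end UnivariateQuadrinomial

section BivariateQuadrinomial

variable {R : Type*} [CommRing R]

theorem X_add_one_ne_zero {σ : Type*} [Nontrivial R] (i : σ) :
    (X i + 1 : MvPolynomial σ R) ≠ 0 := by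
  intro h
  have hdeg := congrArg totalDegree (eq_neg_of_add_eq_zero_left h)
  rw [totalDegree_X, totalDegree_neg, totalDegree_one] at hdeg
  exact one_ne_zero hdeg

theorem finSuccEquiv_X_one : finSuccEquiv R 1 (X 1) = Polynomial.C (X 0) :=
  finSuccEquiv_X_succ (j := 0)

theorem finSuccEquiv_quadrinomial (t : ℕ) :
    finSuccEquiv R 1 (quadrinomial t (X 0) (X 1)) =
      quadrinomial t Polynomial.X (Polynomial.C (X 0)) := by
  simp only [quadrinomial, map_add, map_pow, map_one, finSuccEquiv_X_zero, finSuccEquiv_X_one]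

theorem degreeOf_trivial_factors_le :
    degreeOf 0 ((X 0 + 1) * (X 1 + 1) * (X 0 + X 1) : MvPolynomial (Fin 2) R) ≤ 2 := by
  rw [← natDegree_finSuccEquiv]
  simp only [map_mul, map_add, map_one, finSuccEquiv_X_zero, finSuccEquiv_X_one]
  compute_degree

variable [IsDomain R]

theorem not_isUnit_of_degreeOf_lt_degreeOf_mul {σ : Type*} {p u : MvPolynomial σ R} {i : σ}
    (h : degreeOf i p < degreeOf i (p * u)) : ¬IsUnit u := by
  intro hu
  obtain ⟨r, -, rfl⟩ := isUnit_iff_eq_C_of_isReduced.1 hu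
  exact h.not_ge (degreeOf_mul_C_le p i r)

theorem not_irreducible_of_dvd_of_degreeOf_lt {σ : Type*} {c p f : MvPolynomial σ R} {i : σ}
    (hpf : p ∣ f) (hp : degreeOf i c < degreeOf i (c * p))
    (hf : degreeOf i (c * p) < degreeOf i (c * f)) : ¬Irreducible f := by
  intro hirr
  obtain ⟨h, rfl⟩ := hpf
  rcases hirr.isUnit_or_isUnit rfl with hunit | hunit
  · exact not_isUnit_of_degreeOf_lt_degreeOf_mul hp hunit
  · exact not_isUnit_of_degreeOf_lt_degreeOf_mul (mul_assoc c p h ▸ hf) hunit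

variable [CharP R 2]

theorem trivial_factors_ne_zero :
    ((X 0 + 1) * (X 1 + 1) * (X 0 + X 1) : MvPolynomial (Fin 2) R) ≠ 0 := by
  refine mul_ne_zero (mul_ne_zero (X_add_one_ne_zero 0) (X_add_one_ne_zero 1)) fun h => ?_
  exact zero_ne_one (X_injective (CharTwo.add_eq_zero.1 h))

theorem degreeOf_quadrinomial {t : ℕ} (ht : Odd t) (ht₁ : 1 < t) :
    degreeOf 0 (quadrinomial t (X 0) (X 1) : MvPolynomial (Fin 2) R) = t - 1 := by
  rw [← natDegree_finSuccEquiv, finSuccEquiv_quadrinomial, natDegree_quadrinomial ht ht₁]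
  exact X_add_one_ne_zero 0

theorem quadrinomial_kasami_dvd_quadrinomial_X {n q : ℕ} (hq : q = 2 ^ n) (hn : n ≠ 0) :
    (quadrinomial (q ^ 2 - q + 1) (X 0) (X 1) : MvPolynomial (Fin 2) R) ∣
      quadrinomial (q ^ 4 - q ^ 3 + q ^ 2 - q + 1) (X 0) (X 1) := by
  rw [← map_dvd_iff (finSuccEquiv R 1), finSuccEquiv_quadrinomial, finSuccEquiv_quadrinomial]
  refine quadrinomial_kasami_dvd_quadrinomial hq fun h => ?_
  have hdeg := congrArg totalDegree h
  rw [totalDegree_X_pow, totalDegree_X] at hdeg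
  exact (hq ▸ Nat.one_lt_two_pow hn).ne' hdeg

end BivariateQuadrinomial

theorem mul_counterexampleFactor_eq_quadrinomial :
    (X 0 + 1) * (X 1 + 1) * (X 0 + X 1) * counterexampleFactor =
      quadrinomial 13 (X 0) (X 1) := by
  rw [counterexampleFactor, quadrinomial]
  grind

/-- The explicit degree-10 polynomial divides `g_205`, so `g_205` is reducible over
`𝔽₂`: `t = 205` (with `i = 2`, `ℓ = 51`) is a counterexample to the conjecture that
`g_t` is absolutely irreducible for all `t` not of the form `2^i + 1` or `4^i - 2^i + 1`. -/
theorem stmt_19 (g : MvPolynomial (Fin 2) (ZMod 2))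
    (hg : (X 0 + 1) * (X 1 + 1) * (X 0 + X 1) * g =
      X 0 ^ 205 + X 1 ^ 205 + 1 + (X 0 + X 1 + 1) ^ 205) :
    counterexampleFactor ∣ g ∧ ¬ Irreducible g := by
  replace hg : (X 0 + 1) * (X 1 + 1) * (X 0 + X 1) * g = quadrinomial 205 (X 0) (X 1) := hg
  have hdvd : counterexampleFactor ∣ g := by
    have h := quadrinomial_kasami_dvd_quadrinomial_X (R := ZMod 2) (n := 2) rfl two_ne_zero
    norm_num only at h
    rwa [← mul_counterexampleFactor_eq_quadrinomial, ← hg,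
      mul_dvd_mul_iff_left trivial_factors_ne_zero] at h
  have degreeOf_f₁₃ :
      degreeOf 0 ((X 0 + 1) * (X 1 + 1) * (X 0 + X 1) * counterexampleFactor) = 12 :=
    mul_counterexampleFactor_eq_quadrinomial ▸ degreeOf_quadrinomial (by decide) (by norm_num)
  have degreeOf_f₂₀₅ : degreeOf 0 ((X 0 + 1) * (X 1 + 1) * (X 0 + X 1) * g) = 204 :=
    hg ▸ degreeOf_quadrinomial (Nat.odd_iff.2 rfl) (by norm_num)
  refine ⟨hdvd, not_irreducible_of_dvd_of_degreeOf_lt hdvd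
    (degreeOf_trivial_factors_le.trans_lt ?_) (degreeOf_f₁₃.trans_lt ?_)⟩
  · rw [degreeOf_f₁₃]
    norm_num
  · rw [degreeOf_f₂₀₅]
    norm_num
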